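/- Let U be a consistent c.e. theory and 𝒳 a set of sentences. The following are equivalent: (a) U is doubly 𝒳-generative; (b) U is 𝒳-theory-generative; (c) U is effectively if-essentially 𝒳-incomplete. -/

import Mathlib

/-!
If a procedure claims that `φ` is independent of `U ∪ {φ}` or of `U ∪ {¬φ}`, then its claim is
false, so it can only be excused by the inconsistency of that theory, which means that `U` refutes
`φ`, respectively proves it. Let `Φ` witness effective if-essential incompleteness, and let `A` and
`B` be disjoint c.e. sets. By the recursion theorem there is an index `e` of the theory that adds to
`U` the sentence `φ = Φ(e)` if it lies in `A`, and `¬φ` if it lies in `B`. Hence `U` refutes `φ` if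
`φ ∈ A` and proves `φ` if `φ ∈ B`; otherwise `e` is an index of `U` itself, so `φ` is independent of
`U` and `φ ∈ X`.

Conversely, apply double generativity to the sets of theorems and of refutable sentences of a
consistent c.e. theory `V`. On the resulting sentence, `U` contradicts every decision of `V`, so `V`
cannot decide it if `V` extends `U`.
-/

open FirstOrder FirstOrder.Language

namespace PourEl

/-! ## Recursion-theoretic notions -/

/-- The `i`-th computably enumerable subset of `ℕ` (the domain of the `i`-th
partial computable function). -/
def WSet (i : ℕ) : Set ℕ :=
  {n | ((Denumerable.ofNat Nat.Partrec.Code i).eval n).Dom}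

/-- A set of natural numbers is computably enumerable. -/
def CE (A : Set ℕ) : Prop := ∃ i, A = WSet i

/-- A set of natural numbers is computable. -/
def Comp (A : Set ℕ) : Prop := ComputablePred (· ∈ A)

/-- Disjoint sets `X`, `Y` are computably separable iff some computable set
contains `X` and is disjoint from `Y`. -/
def CompSeparable (X Y : Set ℕ) : Prop :=
  ∃ Z : Set ℕ, Comp Z ∧ X ⊆ Z ∧ Y ∩ Z = ∅

/-- Computable inseparability. -/
def CompInseparable (X Y : Set ℕ) : Prop := ¬ CompSeparable X Y

/-- `Z` and `W` weakly biseparate `X` and `Y`. -/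
def WeaklyBiseparate {α : Type*} (Z W X Y : Set α) : Prop :=
  X ⊆ Z ∧ Y ⊆ W ∧ Z ∩ Y = ∅ ∧ W ∩ X = ∅

/-- `Z` and `W` biseparate `X` and `Y`. -/
def Biseparate {α : Type*} (Z W X Y : Set α) : Prop :=
  WeaklyBiseparate Z W X Y ∧ Z ∩ W = ∅

/-! ## Logical notions -/

variable {L : FirstOrder.Language}

/-- Provability: `φ` is a first-order consequence of `U` (by Gödel completeness,
semantic consequence). -/
def Prv (U : L.Theory) (φ : L.Sentence) : Prop := U ⊨ᵇ φ

/-- `U_p`: the set of theorems of `U`. -/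
def Thms (U : L.Theory) : Set L.Sentence := {φ | Prv U φ}

/-- `U_r`: the set of refutable sentences of `U`. -/
def Refut (U : L.Theory) : Set L.Sentence := {φ | Prv U ∼φ}

/-- Consistency: `U ⊬ ⊥`. -/
def Consistent (U : L.Theory) : Prop := ¬ Prv U ⊥

/-- `φ` is independent of `U`: `U` proves neither `φ` nor `¬φ`. -/
def Independent (U : L.Theory) (φ : L.Sentence) : Prop := ¬ Prv U φ ∧ ¬ Prv U ∼φ

/-- `U` is incomplete: some sentence is independent of it. -/
def Incomplete (U : L.Theory) : Prop := ∃ φ, Independent U φ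

/-- Mono-consequence: `U ⊢_m φ` iff `ψ ⊢ φ` for some `ψ ∈ U`. -/
def MPrv (U : L.Theory) (φ : L.Sentence) : Prop := ∃ ψ ∈ U, Prv {ψ} φ

/-- `U_m`: the set of mono-theorems of `U`. -/
def MThms (U : L.Theory) : Set L.Sentence := {φ | MPrv U φ}

/-- `U_n`: the set of mono-refutable sentences of `U`. -/
def MRefut (U : L.Theory) : Set L.Sentence := {φ | MPrv U ∼φ}

/-- Mono-consistency: every member is consistent by itself. -/
def MonoConsistent (U : L.Theory) : Prop := ∀ ψ ∈ U, Consistent ({ψ} : L.Theory)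

/-- `Û`: the set of all non-empty finite conjunctions of elements of `U`. -/
def hat (U : L.Theory) : L.Theory :=
  {φ | ∃ (ψ : L.Sentence) (l : List L.Sentence),
    ψ ∈ U ∧ (∀ χ ∈ l, χ ∈ U) ∧ φ = l.foldl (· ⊓ ·) ψ}

/-- `U ⋓ V`. -/
def Cup (U V : L.Theory) : L.Theory :=
  {χ | ∃ φ ∈ U, ∃ ψ ∈ V, χ = φ ⊓ ψ}

/-- `U ⋐ V`: for every `φ ∈ U` and `ψ ∈ V` there is `ρ ∈ V` with `ρ ⊢ φ ∧ ψ`. -/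
def Ssub (U V : L.Theory) : Prop :=
  ∀ φ ∈ U, ∀ ψ ∈ V, ∃ ρ ∈ V, Prv {ρ} (φ ⊓ ψ)

/-! ## Gödel numbering -/

/-- A Gödel numbering of the sentences of a (countable) signature: a bijective
coding of sentences by natural numbers that is effective for the basic syntactic
operations, and for which the theorems of a c.e. theory can be effectively
enumerated from an index of the theory. -/
structure Numbering (L : FirstOrder.Language) where
  equiv : L.Sentence ≃ ℕ
  neg_comp : Computable fun n => equiv ∼(equiv.symm n)
  inf_comp : Computable₂ fun m n => equiv (equiv.symm m ⊓ equiv.symm n)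
  imp_comp : Computable₂ fun m n => equiv (equiv.symm m ⟹ equiv.symm n)
  iff_comp : Computable₂ fun m n => equiv (equiv.symm m ⇔ equiv.symm n)
  thmIdx : ℕ → ℕ
  thmIdx_comp : Computable thmIdx
  thmIdx_spec : ∀ i, WSet (thmIdx i) = equiv '' Thms (equiv.symm '' WSet i)

namespace Numbering

variable (g : Numbering L)

/-- The code of a sentence. -/
def code (φ : L.Sentence) : ℕ := g.equiv φ

/-- The set of codes of a set of sentences. -/
def codes (S : Set L.Sentence) : Set ℕ := g.equiv '' S

/-- The theory axiomatised by the `i`-th c.e. set (identified with a set of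
sentences via the numbering). -/
def thy (i : ℕ) : L.Theory := g.equiv.symm '' WSet i

/-- The theory `U` is computably enumerable (with respect to the numbering). -/
def CEThy (U : L.Theory) : Prop := CE (g.codes U)

end Numbering


/-- `Φ` witnesses that `U` is effectively if-essentially `F`-incomplete: whenever
`W i` is a consistent finite extension of `U` (as a set of axioms), `Φ i`
converges to (the code of) a sentence in `F (W i)` independent of `W i`. -/
def IfEssWitness (g : Numbering L) (U : L.Theory)
    (F : Set L.Sentence → Set L.Sentence) (Φ : ℕ →. ℕ) : Prop :=
  ∀ i, (∃ Γ : Finset L.Sentence, g.thy i = U ∪ (Γ : Set L.Sentence)) →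
    Consistent (g.thy i) →
    ∃ n ∈ Φ i, ∃ φ : L.Sentence, g.code φ = n ∧ φ ∈ F (g.thy i) ∧ Independent (g.thy i) φ

/-- `U` is effectively if-essentially `F`-incomplete. -/
def EffIfEssIncomplete (g : Numbering L) (U : L.Theory)
    (F : Set L.Sentence → Set L.Sentence) : Prop :=
  ∃ Φ : ℕ →. ℕ, Partrec Φ ∧ IfEssWitness g U F Φ

/-- `U` is doubly `X`-generative. -/
def DoublyXGenerative (g : Numbering L) (U : L.Theory) (X : Set L.Sentence) : Prop :=
  ∃ Φ : ℕ → ℕ → ℕ, Computable₂ Φ ∧ ∀ i j, WSet i ∩ WSet j = ∅ →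
    (Φ i j ∈ g.codes (Thms U) ↔ Φ i j ∈ WSet j) ∧
    (Φ i j ∈ g.codes (Refut U) ↔ Φ i j ∈ WSet i) ∧
    (Φ i j ∉ WSet i ∪ WSet j → Φ i j ∈ g.codes X)

/-- `U` is `X`-theory-generative. -/
def XTheoryGenerative (g : Numbering L) (U : L.Theory) (X : Set L.Sentence) : Prop :=
  ∃ Ψ : ℕ → ℕ, Computable Ψ ∧ ∀ i, Consistent (g.thy i) →
    (Ψ i ∈ g.codes (Thms U) ↔ Ψ i ∈ g.codes (Refut (g.thy i))) ∧
    (Ψ i ∈ g.codes (Refut U) ↔ Ψ i ∈ g.codes (Thms (g.thy i))) ∧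
    (Ψ i ∉ g.codes (Thms (g.thy i)) ∪ g.codes (Refut (g.thy i)) → Ψ i ∈ g.codes X)

/-! ### Enumerable predicates and the recursion theorem -/

section Computability

open Nat.Partrec (Code)

variable {α β : Type*} [Primcodable α] [Primcodable β]

theorem rePred_comp {p : β → Prop} (hp : REPred p) {f : α → β} (hf : Computable f) :
    REPred fun a => p (f a) :=
  Partrec.comp hp hf

theorem rePred_and {p q : α → Prop} (hp : REPred p) (hq : REPred q) :
    REPred fun a => p a ∧ q a :=
  (Partrec.bind hp (rePred_comp hq Computable.fst).to₂).dom_re.of_eq fun a => by simp [Part.assert]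

theorem rePred_or {p q : α → Prop} (hp : REPred p) (hq : REPred q) :
    REPred fun a => p a ∨ q a := by
  obtain ⟨k, hk, hdom⟩ := Partrec.merge' hp hq
  exact hk.dom_re.of_eq fun a => by simp [(hdom a).2, Part.assert]

theorem rePred_eq : REPred fun p : α × α => p.1 = p.2 :=
  (PrimrecPred.computablePred Primrec.eq).to_re

theorem rePred_exists_mem {f : α →. β} (hf : Partrec f) {p : α × β → Prop} (hp : REPred p) :
    REPred fun a => ∃ b ∈ f a, p (a, b) :=
  (Partrec.bind hf hp.to₂).dom_re.of_eq fun a => by simp [Part.dom_iff_mem]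

theorem rePred_mem {f : α →. β} (hf : Partrec f) : REPred fun p : α × β => p.2 ∈ f p.1 :=
  (rePred_exists_mem (hf.comp Computable.fst) (rePred_comp rePred_eq
    ((Computable.snd.comp Computable.fst).pair Computable.snd))).of_eq fun p => by simp

theorem rePred_mem_WSet : REPred fun p : ℕ × ℕ => p.2 ∈ WSet p.1 :=
  (Code.eval_part.comp ((Computable.ofNat Code).comp Computable.fst) Computable.snd).dom_re

/-- The recursion theorem for uniformly c.e. families of sets: each member may refer to its own
index. -/
theorem exists_computable_WSet_eq_rec {R : ℕ → α → Set ℕ}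
    (hR : REPred fun p : ℕ × α × ℕ => p.2.2 ∈ R p.1 p.2.1) :
    ∃ e : α → ℕ, Computable e ∧ ∀ a, WSet (e a) = R (e a) a := by
  let index (c : Code) (k : ℕ) : ℕ := Encodable.encode (c.curry k)
  have index_comp : Computable₂ index :=
    Computable.encode.comp Code.primrec₂_curry.to_comp
  -- `F c` on the pair of `encode a` and `n` halts iff `n ∈ R (index c (encode a)) a`, so that
  -- `index c (encode a)` is a self-referring index once `c.eval = F c`.
  let F (c : Code) (x : ℕ) : Part ℕ :=
    (Encodable.decode (α := α) x.unpair.1 : Part α).bind fun a =>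
      (Part.assert (x.unpair.2 ∈ R (index c x.unpair.1) a) fun _ => Part.some ()).map fun _ => 0
  have hF : Partrec₂ F := by
    have hx : Computable fun y : (Code × ℕ) × α => y.1.2.unpair :=
      Computable.unpair.comp (Computable.snd.comp Computable.fst)
    have hargs : Computable fun y : (Code × ℕ) × α =>
        (index y.1.1 y.1.2.unpair.1, y.2, y.1.2.unpair.2) :=
      (index_comp.comp (Computable.fst.comp Computable.fst) (Computable.fst.comp hx)).pair
        (Computable.snd.pair (Computable.snd.comp hx))
    have hdecode : Computable fun y : Code × ℕ => Encodable.decode (α := α) y.2.unpair.1 :=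
      Computable.decode.comp (Computable.fst.comp (Computable.unpair.comp Computable.snd))
    exact hdecode.ofOption.bind ((rePred_comp hR hargs).map (Computable.const 0).to₂).to₂
  obtain ⟨c, hc⟩ := Code.fixed_point₂ hF
  refine ⟨fun a => index c (Encodable.encode a),
    index_comp.comp (Computable.const c) Computable.encode, fun a => Set.ext fun n => ?_⟩
  simp [WSet, index, Code.eval_curry, hc, F, Part.assert]

theorem exists_computable_WSet_eq {R : α → Set ℕ} (hR : REPred fun p : α × ℕ => p.2 ∈ R p.1) :
    ∃ e : α → ℕ, Computable e ∧ ∀ a, WSet (e a) = R a :=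
  exists_computable_WSet_eq_rec (R := fun _ => R) (rePred_comp hR Computable.snd)

end Computability

/-! ### First-order consequence -/

section Logic

variable {U V A B S X : L.Theory} {φ ψ : L.Sentence}

theorem Prv.of_mem (h : φ ∈ U) : Prv U φ :=
  Theory.models_sentence_of_mem h

theorem Prv.mono (hUV : U ⊆ V) (h : Prv U φ) : Prv V φ :=
  Theory.models_of_models_theory (fun _ hψ => Prv.of_mem (hUV hψ)) h

theorem prv_union_singleton_iff : Prv (U ∪ {φ}) ψ ↔ Prv U (φ.imp ψ) := by
  simp only [Prv, Theory.models_sentence_iff]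
  constructor
  · intro h M
    refine (Sentence.realize_imp M).2 fun hφ => ?_
    have : M ⊨ (U ∪ {φ} : L.Theory) := M.is_model.union (Theory.model_singleton_iff.2 hφ)
    exact (Theory.models_sentence_iff.2 h).realize_sentence M
  · intro h M
    have : M ⊨ U := M.is_model.mono Set.subset_union_left
    have hφ : M ⊨ φ := Theory.realize_sentence_of_mem (U ∪ {φ}) (Or.inr rfl)
    exact (Sentence.realize_imp M).1 ((Theory.models_sentence_iff.2 h).realize_sentence M) hφ

theorem prv_not_not : Prv U ∼(∼φ) ↔ Prv U φ := by
  simp [Prv, Theory.models_sentence_iff, Sentence.realize_not]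

theorem not_consistent_union_singleton : ¬ Consistent (U ∪ {φ}) ↔ Prv U ∼φ :=
  not_not.trans prv_union_singleton_iff

theorem not_consistent_union_not : ¬ Consistent (U ∪ {∼φ}) ↔ Prv U φ :=
  not_consistent_union_singleton.trans prv_not_not

theorem Consistent.not_prv_not (hU : Consistent U) (h : Prv U φ) : ¬ Prv U ∼φ := fun h' =>
  hU (Theory.models_sentence_iff.2 fun M =>
    ((Sentence.realize_not M).1 (h'.realize_sentence M) (h.realize_sentence M)).elim)

theorem independent_of_opposed_subtheory (hUV : U ⊆ V) (hV : Consistent V)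
    (hpos : Prv V φ → Prv U ∼φ) (hneg : Prv V ∼φ → Prv U φ) : Independent V φ :=
  ⟨fun h => hV.not_prv_not h ((hpos h).mono hUV),
    fun h => hV.not_prv_not ((hneg h).mono hUV) h⟩

theorem prv_not_of_independent_union_singleton
    (h : Consistent (U ∪ {φ}) → Independent (U ∪ {φ}) φ) : Prv U ∼φ :=
  not_consistent_union_singleton.1 fun hc => (h hc).1 (.of_mem (Or.inr rfl))

theorem prv_of_independent_union_not
    (h : Consistent (U ∪ {∼φ}) → Independent (U ∪ {∼φ}) φ) : Prv U φ :=
  not_consistent_union_not.1 fun hc => (h hc).2 (.of_mem (Or.inr rfl))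

/-- The theory `U` with a decision on the candidates in `S` added: those in `A` are affirmed and
those in `B` are negated. The diagonal argument has at most one candidate; a set of candidates also
covers the case that none is ever produced. -/
def adjoinVerdicts (U A B S : L.Theory) : L.Theory :=
  U ∪ (S ∩ A ∪ BoundedFormula.not '' (S ∩ B))

theorem exists_finset_adjoinVerdicts_eq (hS : S.Finite) :
    ∃ Γ : Finset L.Sentence, adjoinVerdicts U A B S = U ∪ (Γ : Set L.Sentence) := by
  obtain ⟨Γ, hΓ⟩ := ((hS.inter_of_left A).union ((hS.inter_of_left B).image _)).exists_finset_coe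
  exact ⟨Γ, by rw [hΓ, adjoinVerdicts]⟩

theorem adjoinVerdicts_singleton_of_mem_left (hA : φ ∈ A) (hB : φ ∉ B) :
    adjoinVerdicts U A B {φ} = U ∪ {φ} := by
  simp [adjoinVerdicts, hA, hB]

theorem adjoinVerdicts_singleton_of_mem_right (hA : φ ∉ A) (hB : φ ∈ B) :
    adjoinVerdicts U A B {φ} = U ∪ {∼φ} := by
  simp [adjoinVerdicts, hA, hB]

theorem adjoinVerdicts_singleton_of_notMem (hA : φ ∉ A) (hB : φ ∉ B) :
    adjoinVerdicts U A B {φ} = U := by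
  simp [adjoinVerdicts, hA, hB]

theorem prv_iff_mem_of_independent_adjoinVerdicts (hU : Consistent U) (hAB : Disjoint A B)
    (hφ : Consistent (adjoinVerdicts U A B {φ}) →
      φ ∈ X ∧ Independent (adjoinVerdicts U A B {φ}) φ) :
    (Prv U φ ↔ φ ∈ B) ∧ (Prv U ∼φ ↔ φ ∈ A) ∧ (φ ∉ A ∪ B → φ ∈ X) := by
  by_cases hA : φ ∈ A
  · have hB : φ ∉ B := hAB.notMem_of_mem_left hA
    rw [adjoinVerdicts_singleton_of_mem_left hA hB] at hφ
    have hneg : Prv U ∼φ := prv_not_of_independent_union_singleton fun hc => (hφ hc).2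
    have hpos : ¬ Prv U φ := fun h => hU.not_prv_not h hneg
    simp [hA, hB, hpos, hneg]
  by_cases hB : φ ∈ B
  · rw [adjoinVerdicts_singleton_of_mem_right hA hB] at hφ
    have hpos : Prv U φ := prv_of_independent_union_not fun hc => (hφ hc).2
    simp [hA, hB, hpos, hU.not_prv_not hpos]
  · rw [adjoinVerdicts_singleton_of_notMem hA hB] at hφ
    obtain ⟨hX, hpos, hneg⟩ := hφ hU
    simp [hA, hB, hpos, hneg, hX]

end Logic

/-! ### Generativity and effective incompleteness -/

namespace Numbering

variable (g : Numbering L) {U : L.Theory} {Φ : ℕ →. ℕ}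

theorem mem_codes {S : Set L.Sentence} {n : ℕ} : n ∈ g.codes S ↔ g.equiv.symm n ∈ S :=
  Set.mem_image_equiv

theorem mem_thy {i : ℕ} {φ : L.Sentence} : φ ∈ g.thy i ↔ g.code φ ∈ WSet i :=
  Set.mem_image_equiv

theorem exists_computable_WSet_eq_codes_refut :
    ∃ r : ℕ → ℕ, Computable r ∧ ∀ i, WSet (r i) = g.codes (Refut (g.thy i)) := by
  have hrefut : REPred fun p : ℕ × ℕ => p.2 ∈ g.codes (Refut (g.thy p.1)) :=
    (rePred_comp rePred_mem_WSet ((g.thmIdx_comp.comp Computable.fst).pair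
      (g.neg_comp.comp Computable.snd))).of_eq fun p => by
        rw [g.thmIdx_spec]
        simp [mem_codes, Refut, Thms, thy]
  exact exists_computable_WSet_eq hrefut

/-- The theory that the diagonal argument attaches to an index `x`: the sentence with code `Φ x` is
adjoined to `U` if it lies in the `i`-th theory, and its negation if it lies in the `j`-th. The
theory is `U` if `Φ x` diverges. -/
def adjoinProposed (U : L.Theory) (Φ : ℕ →. ℕ) (x i j : ℕ) : L.Theory :=
  adjoinVerdicts U (g.thy i) (g.thy j) {φ | g.code φ ∈ Φ x}

theorem finite_setOf_code_mem (x : Part ℕ) : {φ | g.code φ ∈ x}.Finite :=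
  Set.Subsingleton.finite fun _ hφ _ hψ => g.equiv.injective (Part.mem_unique hφ hψ)

theorem adjoinProposed_of_code_mem {x i j : ℕ} {φ : L.Sentence} (hφ : g.code φ ∈ Φ x) :
    g.adjoinProposed U Φ x i j = adjoinVerdicts U (g.thy i) (g.thy j) {φ} := by
  have hproposed : {ψ | g.code ψ ∈ Φ x} = {φ} :=
    Set.eq_singleton_iff_unique_mem.2
      ⟨hφ, fun ψ hψ => g.equiv.injective (Part.mem_unique hψ hφ)⟩
  rw [adjoinProposed, hproposed]

theorem mem_codes_adjoinProposed {x i j n : ℕ} :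
    n ∈ g.codes (g.adjoinProposed U Φ x i j) ↔
      n ∈ g.codes U ∨ (n ∈ Φ x ∧ n ∈ WSet i) ∨
        ∃ m ∈ Φ x, m ∈ WSet j ∧ g.equiv ∼(g.equiv.symm m) = n := by
  simp [adjoinProposed, adjoinVerdicts, mem_codes, mem_thy, code, g.equiv.symm.surjective.exists,
    Equiv.eq_symm_apply, and_assoc]

theorem rePred_mem_codes_adjoinProposed (hU : g.CEThy U) (hΦ : Partrec Φ) :
    REPred fun p : ℕ × (ℕ × ℕ) × ℕ =>
      p.2.2 ∈ g.codes (g.adjoinProposed U Φ p.1 p.2.1.1 p.2.1.2) := by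
  obtain ⟨u, hu⟩ := hU
  have hi : Computable fun p : ℕ × (ℕ × ℕ) × ℕ => p.2.1.1 :=
    Computable.fst.comp (Computable.fst.comp Computable.snd)
  have hj : Computable fun p : ℕ × (ℕ × ℕ) × ℕ => p.2.1.2 :=
    Computable.snd.comp (Computable.fst.comp Computable.snd)
  have hn : Computable fun p : ℕ × (ℕ × ℕ) × ℕ => p.2.2 := Computable.snd.comp Computable.snd
  have hbase : REPred fun p : ℕ × (ℕ × ℕ) × ℕ => p.2.2 ∈ WSet u :=
    (rePred_comp rePred_mem_WSet ((Computable.const u).pair hn) :)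
  have haccepted : REPred fun p : ℕ × (ℕ × ℕ) × ℕ => p.2.2 ∈ Φ p.1 ∧ p.2.2 ∈ WSet p.2.1.1 :=
    (rePred_and (rePred_comp (rePred_mem hΦ) (Computable.fst.pair hn))
      (rePred_comp rePred_mem_WSet (hi.pair hn)) :)
  have hrejected : REPred fun p : ℕ × (ℕ × ℕ) × ℕ =>
      ∃ m ∈ Φ p.1, m ∈ WSet p.2.1.2 ∧ g.equiv ∼(g.equiv.symm m) = p.2.2 :=
    (rePred_exists_mem (hΦ.comp Computable.fst) (rePred_and
      (rePred_comp rePred_mem_WSet ((hj.comp Computable.fst).pair Computable.snd))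
      (rePred_comp rePred_eq ((g.neg_comp.comp Computable.snd).pair (hn.comp Computable.fst)))) :)
  refine (rePred_or hbase (rePred_or haccepted hrejected)).of_eq fun p => ?_
  rw [mem_codes_adjoinProposed, hu]

theorem exists_computable_thy_eq_adjoinProposed (hU : g.CEThy U) (hΦ : Partrec Φ) :
    ∃ e : ℕ × ℕ → ℕ, Computable e ∧
      ∀ p, g.thy (e p) = g.adjoinProposed U Φ (e p) p.1 p.2 := by
  obtain ⟨e, he, hWSet⟩ := exists_computable_WSet_eq_rec
    (R := fun x (p : ℕ × ℕ) => g.codes (g.adjoinProposed U Φ x p.1 p.2))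
    (g.rePred_mem_codes_adjoinProposed hU hΦ)
  exact ⟨e, he, fun p => Set.ext fun φ => by simp [mem_thy, hWSet, mem_codes, code]⟩

end Numbering

variable {g : Numbering L} {U X : L.Theory}

theorem DoublyXGenerative.xTheoryGenerative (h : DoublyXGenerative g U X) :
    XTheoryGenerative g U X := by
  obtain ⟨Φ, hΦ, hgen⟩ := h
  obtain ⟨r, hr, hrefut⟩ := g.exists_computable_WSet_eq_codes_refut
  have hthms (i : ℕ) : WSet (g.thmIdx i) = g.codes (Thms (g.thy i)) := g.thmIdx_spec i
  refine ⟨fun i => Φ (g.thmIdx i) (r i), hΦ.comp g.thmIdx_comp hr, fun i hi => ?_⟩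
  have hdisj : WSet (g.thmIdx i) ∩ WSet (r i) = ∅ := by
    rw [hthms, hrefut, Set.eq_empty_iff_forall_notMem]
    rintro n ⟨hn, hn'⟩
    exact hi.not_prv_not (g.mem_codes.1 hn) (g.mem_codes.1 hn')
  simpa only [hthms, hrefut] using hgen _ _ hdisj

theorem XTheoryGenerative.effIfEssIncomplete (h : XTheoryGenerative g U X) :
    EffIfEssIncomplete g U fun _ => X := by
  obtain ⟨Ψ, hΨ, hgen⟩ := h
  refine ⟨Ψ, hΨ.partrec, fun i ⟨Γ, hΓ⟩ hi => ?_⟩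
  have hUi : U ⊆ g.thy i := hΓ ▸ Set.subset_union_left
  have hgen_i := hgen i hi
  simp only [g.mem_codes, Set.mem_union] at hgen_i
  obtain ⟨hpos, hneg, hX⟩ := hgen_i
  have hind : Independent (g.thy i) (g.equiv.symm (Ψ i)) :=
    independent_of_opposed_subtheory hUi hi hneg.2 hpos.2
  exact ⟨Ψ i, Part.mem_some _, g.equiv.symm (Ψ i), g.equiv.apply_symm_apply _,
    hX (not_or.2 hind), hind⟩

section IfEssWitness

variable {F : Set L.Sentence → Set L.Sentence} {Φ : ℕ →. ℕ} {x i j : ℕ}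

theorem IfEssWitness.exists_independent (h : IfEssWitness g U F Φ)
    (hx : g.thy x = g.adjoinProposed U Φ x i j) (hc : Consistent (g.thy x)) :
    ∃ φ, g.code φ ∈ Φ x ∧ φ ∈ F (g.thy x) ∧ Independent (g.thy x) φ := by
  obtain ⟨Γ, hΓ⟩ := exists_finset_adjoinVerdicts_eq (U := U) (A := g.thy i) (B := g.thy j)
    (g.finite_setOf_code_mem (Φ x))
  obtain ⟨_, hφ, φ, rfl, hX, hind⟩ := h x ⟨Γ, hx.trans hΓ⟩ hc
  exact ⟨φ, hφ, hX, hind⟩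

theorem IfEssWitness.dom (h : IfEssWitness g U F Φ) (hcon : Consistent U)
    (hx : g.thy x = g.adjoinProposed U Φ x i j) : (Φ x).Dom := by
  by_contra hdom
  have hthy : g.thy x = U := by
    rw [hx, Numbering.adjoinProposed, Part.eq_none_iff'.2 hdom]
    simp [adjoinVerdicts]
  obtain ⟨φ, hφ, -⟩ := h.exists_independent hx (hthy ▸ hcon)
  exact hdom (Part.dom_iff_mem.2 ⟨_, hφ⟩)

theorem IfEssWitness.prv_iff_mem (h : IfEssWitness g U (fun _ => X) Φ) (hcon : Consistent U)
    (hx : g.thy x = g.adjoinProposed U Φ x i j) (hij : Disjoint (g.thy i) (g.thy j))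
    {φ : L.Sentence} (hφ : g.code φ ∈ Φ x) :
    (Prv U φ ↔ φ ∈ g.thy j) ∧ (Prv U ∼φ ↔ φ ∈ g.thy i) ∧
      (φ ∉ g.thy i ∪ g.thy j → φ ∈ X) := by
  refine prv_iff_mem_of_independent_adjoinVerdicts hcon hij fun hc => ?_
  rw [← g.adjoinProposed_of_code_mem hφ, ← hx] at hc ⊢
  obtain ⟨ψ, hψ, hind⟩ := h.exists_independent hx hc
  obtain rfl : ψ = φ := g.equiv.injective (Part.mem_unique hψ hφ)
  exact hind

end IfEssWitness

theorem EffIfEssIncomplete.doublyXGenerative (hU : g.CEThy U) (hcon : Consistent U)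
    (h : EffIfEssIncomplete g U fun _ => X) : DoublyXGenerative g U X := by
  obtain ⟨Φ, hΦ, hwit⟩ := h
  obtain ⟨e, he, hthy⟩ := g.exists_computable_thy_eq_adjoinProposed hU hΦ
  have hdom (p : ℕ × ℕ) : (Φ (e p)).Dom := hwit.dom hcon (hthy p)
  refine ⟨fun i j => (Φ (e (i, j))).get (hdom _),
    (hΦ.comp he).of_eq_tot fun _ => Part.get_mem _, fun i j hij => ?_⟩
  have hdisj : Disjoint (g.thy i) (g.thy j) :=
    (Set.disjoint_image_iff g.equiv.symm.injective).2 (Set.disjoint_iff_inter_eq_empty.2 hij)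
  obtain ⟨φ, hφ⟩ := g.equiv.surjective ((Φ (e (i, j))).get (hdom _))
  have hmem : g.code φ ∈ Φ (e (i, j)) := Part.eq_get_iff_mem (hdom _) |>.1 hφ
  simpa [← hφ, g.mem_codes, g.mem_thy] using! hwit.prv_iff_mem hcon (hthy (i, j)) hdisj hmem

/-- For a consistent c.e. theory `U` and a set `X` of
sentences, the following are equivalent: (a) `U` is doubly `X`-generative;
(b) `U` is `X`-theory-generative; (c) `U` is effectively if-essentially
`X`-incomplete. -/
theorem statement11 {L : FirstOrder.Language} (g : Numbering L) (U : L.Theory)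
    (hU : g.CEThy U) (hcon : Consistent U) (X : Set L.Sentence) :
    [DoublyXGenerative g U X,
     XTheoryGenerative g U X,
     EffIfEssIncomplete g U (fun _ => X)].TFAE := by
  tfae_have 1 → 2 := DoublyXGenerative.xTheoryGenerative
  tfae_have 2 → 3 := XTheoryGenerative.effIfEssIncomplete
  tfae_have 3 → 1 := EffIfEssIncomplete.doublyXGenerative hU hcon
  tfae_finish

end PourEl
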